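/- arXiv:1103.2105 — 2 statements merged into one kernel-verified Lean document; each statement's English description precedes it below -/
import Mathlib

section
/- Let f ∈ [det−1] be such that every monomial occurring in f has total degree at most d (i.e., f ∈ C_{≤d}). Then the degree-d homogeneous component π_d(f) of f belongs to the differential ideal [det]. -/
open MvPolynomial

/-- Variables of the differential polynomial ring `C = K{c₁₁, c₁₂, c₂₁, c₂₂}`:
the variable `((i, j), n)` represents `c_{ij}^{(n)}`, the `n`-th derivative of `c_{ij}`. -/
abbrev DVar : Type := (Fin 2 × Fin 2) × ℕ

/-- The differential polynomial ring `C = K{c₁₁, c₁₂, c₂₁, c₂₂}`. -/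
abbrev DiffPolyC (K : Type) [CommRing K] : Type := MvPolynomial DVar K

/-- `det = c₁₁·c₂₂ − c₁₂·c₂₁`. -/
noncomputable def detC (K : Type) [CommRing K] : DiffPolyC K :=
  X ((0, 0), 0) * X ((1, 1), 0) - X ((0, 1), 0) * X ((1, 0), 0)

/-- `D : C → C` is the unique derivation extending the derivation `δ` of `K` and shifting
variables, i.e. `D(c_{ij}^{(n)}) = c_{ij}^{(n+1)}`. -/
def IsDiffStructure {K : Type} [CommRing K] (δ : K → K) (D : DiffPolyC K → DiffPolyC K) : Prop :=
  (∀ a b : K, δ (a + b) = δ a + δ b) ∧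
  (∀ a b : K, δ (a * b) = δ a * b + a * δ b) ∧
  (∀ f g : DiffPolyC K, D (f + g) = D f + D g) ∧
  (∀ f g : DiffPolyC K, D (f * g) = D f * g + f * D g) ∧
  (∀ a : K, D (C a) = C (δ a)) ∧
  (∀ v : DVar, D (X v) = X (v.1, v.2 + 1))

/-!
List the variables of the first row as `x₀, x₁, x₂, … = c₁₁, c₁₂, c₁₁', …` and those of the second
row likewise as `y₀, y₁, y₂, …`. Then `det⁽ⁿ⁾ = ∑_{k + l = 2n + 1} (-1)ᵏ (n choose ⌊k/2⌋) xₖ yₗ`.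
If `xₖ` has weight `k + 1` and `yₗ` has weight `l`, all these terms have the same weight, and we let
the most balanced one, `xₙ yₙ₊₁`, lead. The leading monomials for different `n` are coprime, so the
ring is free over `K[det, det', …]`, with a basis of monomials `b` divisible by no leading monomial.

Write `f = ∑ p_b(det, det', …) b`. If `f ∈ [det - 1]`, then every `p_b` vanishes at `(1, 0, 0, …)`.
The degree `d` component of `f` can lie outside `[det]` only through the constant term of some `p_b`
with `deg b = d`; but `deg f ≤ d` forces such a `p_b` to be constant, hence zero.
-/

section TermOrder

variable {σ : Type*}

/-- A term order, `r v u` meaning that the exponent `v` is smaller than `u`. Unlike for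
`MonomialOrder`, comparability of any two exponents is not required. -/
structure IsTermOrder (r : (σ →₀ ℕ) → (σ →₀ ℕ) → Prop) : Prop where
  wf : WellFounded r
  trans : ∀ {a b c}, r a b → r b c → r a c
  add_right : ∀ {a b} (c), r a b → r (a + c) (b + c)

namespace IsTermOrder

variable {r : (σ →₀ ℕ) → (σ →₀ ℕ) → Prop}

theorem irrefl (hr : IsTermOrder r) (a : σ →₀ ℕ) : ¬ r a a :=
  hr.wf.irrefl.irrefl a

theorem add_left (hr : IsTermOrder r) {a b : σ →₀ ℕ} (c : σ →₀ ℕ) (h : r a b) :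
    r (c + a) (c + b) := by
  simpa only [add_comm c] using hr.add_right c h

theorem eq_and_eq_or_add_lt_add (hr : IsTermOrder r) {a b u v : σ →₀ ℕ}
    (hau : a = u ∨ r a u) (hbv : b = v ∨ r b v) : a = u ∧ b = v ∨ r (a + b) (u + v) := by
  rcases hau with rfl | hau <;> rcases hbv with rfl | hbv
  · exact .inl ⟨rfl, rfl⟩
  · exact .inr (hr.add_left a hbv)
  · exact .inr (hr.add_right b hau)
  · exact .inr (hr.trans (hr.add_right b hau) (hr.add_left u hbv))

theorem exists_maximal (hr : IsTermOrder r) {s : Finset (σ →₀ ℕ)} (hs : s.Nonempty) :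
    ∃ u ∈ s, ∀ v ∈ s, ¬ r u v := by
  have : IsStrictOrder (σ →₀ ℕ) (Function.swap r) :=
    { irrefl := hr.irrefl, trans := fun _ _ _ hab hbc => hr.trans hbc hab }
  obtain ⟨⟨u, hu⟩, -, hmax⟩ := (Finset.wellFoundedOn (r := Function.swap r) s).has_min Set.univ
    ⟨⟨hs.choose, hs.choose_spec⟩, Set.mem_univ _⟩
  exact ⟨u, hu, fun v hv => hmax ⟨v, hv⟩ (Set.mem_univ _)⟩

end IsTermOrder

end TermOrder

section LeadingTerm

variable {σ K : Type*} [CommRing K]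

/-- `p` has leading exponent `u` for the order `r`, with an invertible leading coefficient. -/
structure HasUnitLeadingTerm (r : (σ →₀ ℕ) → (σ →₀ ℕ) → Prop) (p : MvPolynomial σ K)
    (u : σ →₀ ℕ) : Prop where
  isUnit_coeff : IsUnit (coeff u p)
  eq_or_lt : ∀ v ∈ p.support, v = u ∨ r v u

namespace HasUnitLeadingTerm

variable {r : (σ →₀ ℕ) → (σ →₀ ℕ) → Prop}

theorem sum_monomial {ι : Type*} (hr : IsTermOrder r) {s : Finset ι} {u : ι → σ →₀ ℕ} {c : ι → K}
    {k : ι} (hk : k ∈ s) (hc : IsUnit (c k)) (hlt : ∀ i ∈ s, i ≠ k → r (u i) (u k)) :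
    HasUnitLeadingTerm r (∑ i ∈ s, monomial (u i) (c i)) (u k) where
  isUnit_coeff := by
    classical
    rw [coeff_sum, Finset.sum_eq_single_of_mem k hk, coeff_monomial, if_pos rfl]
    · exact hc
    · intro i hi hik
      rw [coeff_monomial, if_neg]
      exact fun h => hr.irrefl _ (h ▸ hlt i hi hik)
  eq_or_lt v hv := by
    classical
    obtain ⟨i, hi, hvi⟩ := Finset.mem_biUnion.1 (support_sum hv)
    obtain rfl : v = u i := Finset.mem_singleton.1 (support_monomial_subset hvi)
    rcases eq_or_ne i k with rfl | hik
    · exact .inl rfl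
    · exact .inr (hlt i hi hik)

theorem monomial_one (r : (σ →₀ ℕ) → (σ →₀ ℕ) → Prop) (u : σ →₀ ℕ) :
    HasUnitLeadingTerm r (monomial u (1 : K)) u where
  isUnit_coeff := by classical simp [coeff_monomial]
  eq_or_lt _ hv := .inl (Finset.mem_singleton.1 (support_monomial_subset hv))

theorem mul (hr : IsTermOrder r) {p q : MvPolynomial σ K} {u v : σ →₀ ℕ}
    (hp : HasUnitLeadingTerm r p u) (hq : HasUnitLeadingTerm r q v) :
    HasUnitLeadingTerm r (p * q) (u + v) where
  isUnit_coeff := by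
    classical
    suffices hcoeff : coeff (u + v) (p * q) = coeff u p * coeff v q by
      rw [hcoeff]
      exact hp.isUnit_coeff.mul hq.isUnit_coeff
    rw [coeff_mul]
    refine Finset.sum_eq_single_of_mem (u, v) (by simp) ?_
    rintro ⟨a, b⟩ hab hne
    rw [Finset.HasAntidiagonal.mem_antidiagonal] at hab
    by_contra hmul
    have ha := hp.eq_or_lt a (mem_support_iff.2 (left_ne_zero_of_mul hmul))
    have hb := hq.eq_or_lt b (mem_support_iff.2 (right_ne_zero_of_mul hmul))
    rcases hr.eq_and_eq_or_add_lt_add ha hb with ⟨rfl, rfl⟩ | hlt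
    · exact hne rfl
    · exact hr.irrefl _ (hab ▸ hlt)
  eq_or_lt w hw := by
    classical
    obtain ⟨a, ha, b, hb, rfl⟩ := Finset.mem_add.1 (support_mul p q hw)
    rcases hr.eq_and_eq_or_add_lt_add (hp.eq_or_lt a ha) (hq.eq_or_lt b hb) with ⟨rfl, rfl⟩ | hlt
    · exact .inl rfl
    · exact .inr hlt

theorem prod (hr : IsTermOrder r) {ι : Type*} (s : Finset ι) {p : ι → MvPolynomial σ K}
    {u : ι → σ →₀ ℕ} (h : ∀ i ∈ s, HasUnitLeadingTerm r (p i) (u i)) :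
    HasUnitLeadingTerm r (∏ i ∈ s, p i) (∑ i ∈ s, u i) := by
  classical
  induction s using Finset.induction_on with
  | empty => simpa using monomial_one r 0
  | insert i s hi ih =>
    rw [Finset.prod_insert hi, Finset.sum_insert hi]
    exact (h i (s.mem_insert_self i)).mul hr
      (ih fun j hj => h j (Finset.mem_insert_of_mem hj))

theorem pow (hr : IsTermOrder r) {p : MvPolynomial σ K} {u : σ →₀ ℕ}
    (hp : HasUnitLeadingTerm r p u) (n : ℕ) : HasUnitLeadingTerm r (p ^ n) (n • u) := by
  simpa using prod hr (Finset.range n) fun _ _ => hp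

theorem sub_monomial_coeff_mem_restrictSupport {p : MvPolynomial σ K} {u : σ →₀ ℕ}
    (hp : HasUnitLeadingTerm r p u) :
    p - monomial u (coeff u p) ∈ restrictSupport K {v | r v u} := by
  classical
  rw [mem_restrictSupport_iff]
  intro v hv
  rw [Finset.mem_coe, mem_support_iff, coeff_sub, coeff_monomial] at hv
  split_ifs at hv with huv
  · exact absurd (by rw [huv, sub_self]) hv
  · rw [sub_zero] at hv
    exact (hp.eq_or_lt v (mem_support_iff.2 hv)).resolve_left (Ne.symm huv)

variable {κ : Type*} {p : κ → MvPolynomial σ K} {u : κ → σ →₀ ℕ}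

theorem linearIndependent (hr : IsTermOrder r) (hp : ∀ x, HasUnitLeadingTerm r (p x) (u x))
    (hu : Function.Injective u) : LinearIndependent K p := by
  classical
  rw [linearIndependent_iff]
  intro l hl
  by_contra hl0
  obtain ⟨_, hmem, hmax⟩ := hr.exists_maximal ((Finsupp.support_nonempty_iff.2 hl0).image u)
  obtain ⟨x, hx, rfl⟩ := Finset.mem_image.1 hmem
  have hcoeff : coeff (u x) (Finsupp.linearCombination K p l) = l x * coeff (u x) (p x) := by
    rw [Finsupp.linearCombination_apply, Finsupp.sum, coeff_sum, Finset.sum_eq_single_of_mem x hx,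
      coeff_smul, smul_eq_mul]
    intro y hy hyx
    rw [coeff_smul, smul_eq_mul]
    by_contra hmul
    rcases (hp y).eq_or_lt _ (mem_support_iff.2 (right_ne_zero_of_mul hmul)) with huxy | hlt
    · exact hyx (hu huxy).symm
    · exact hmax _ (Finset.mem_image_of_mem u hy) hlt
  rw [hl, coeff_zero, eq_comm, (hp x).isUnit_coeff.mul_left_eq_zero] at hcoeff
  exact Finsupp.mem_support_iff.1 hx hcoeff

theorem top_le_span_range (hr : IsTermOrder r) (hp : ∀ x, HasUnitLeadingTerm r (p x) (u x))
    (hu : Function.Surjective u) : ⊤ ≤ Submodule.span K (Set.range p) := by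
  have hmonomial (w : σ →₀ ℕ) (c : K) : monomial w c ∈ Submodule.span K (Set.range p) := by
    induction w using hr.wf.induction generalizing c with
    | h w ih =>
      obtain ⟨x, rfl⟩ := hu w
      have hpx : p x ∈ Submodule.span K (Set.range p) := Submodule.subset_span ⟨x, rfl⟩
      have htail : p x - monomial (u x) (coeff (u x) (p x)) ∈ Submodule.span K (Set.range p) := by
        have hle : restrictSupport K {v | r v (u x)} ≤ Submodule.span K (Set.range p) := by
          rw [restrictSupport_eq_span, Submodule.span_le]
          rintro _ ⟨v, hv, rfl⟩
          exact ih v hv 1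
        exact hle (hp x).sub_monomial_coeff_mem_restrictSupport
      have hlead := Submodule.sub_mem _ hpx htail
      rw [sub_sub_cancel] at hlead
      obtain ⟨b, hb⟩ := (hp x).isUnit_coeff.exists_left_inv
      simpa [smul_monomial, mul_assoc, hb] using Submodule.smul_mem _ (c * b) hlead
  intro f _
  rw [f.as_sum]
  exact Submodule.sum_mem _ fun w _ => hmonomial w _

end HasUnitLeadingTerm

end LeadingTerm

section StandardExponents

variable {σ ι : Type*}

/-- The exponents of the standard monomials: those divisible by none of the monomials with
exponents `m i`. -/
def standardExponents (m : ι → σ →₀ ℕ) : Set (σ →₀ ℕ) :=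
  {b | ∀ i, ¬ m i ≤ b}

/-- The exponent of the standard monomial `x.1` times a product of powers `x.2` of the monomials
with exponents `m i`. -/
noncomputable def standardSum (m : ι → σ →₀ ℕ) (x : standardExponents m × (ι →₀ ℕ)) : σ →₀ ℕ :=
  x.1 + Finsupp.linearCombination ℕ m x.2

variable {m : ι → σ →₀ ℕ}

theorem linearCombination_apply_of_mem_support
    (hdisj : Pairwise fun i j => Disjoint (m i).support (m j).support) (a : ι →₀ ℕ) {i : ι} {v : σ}
    (hv : v ∈ (m i).support) : Finsupp.linearCombination ℕ m a v = a i * m i v := by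
  rw [Finsupp.linearCombination_apply, Finsupp.sum_apply, Finsupp.sum,
    Finset.sum_eq_single i]
  · rfl
  · intro j _ hji
    have hvj : m j v = 0 :=
      Finsupp.notMem_support_iff.1 (Finset.disjoint_left.1 (hdisj hji.symm) hv)
    simp [hvj]
  · intro hi
    simp [Finsupp.notMem_support_iff.1 hi]

theorem standardSum_surjective (hm : ∀ i, m i ≠ 0) : Function.Surjective (standardSum m) := by
  intro u
  induction u using WellFoundedLT.induction with
  | ind u ih =>
    by_cases hu : u ∈ standardExponents m
    · exact ⟨(⟨u, hu⟩, 0), by simp [standardSum]⟩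
    · obtain ⟨i, hi⟩ : ∃ i, m i ≤ u := by simpa [standardExponents] using hu
      have hlt : u - m i < u := by
        refine lt_of_le_of_ne tsub_le_self fun h => hm i ?_
        rw [← add_eq_left (a := u - m i), tsub_add_cancel_of_le hi, h]
      obtain ⟨⟨b, a⟩, hba⟩ := ih _ hlt
      refine ⟨(b, a + Finsupp.single i 1), ?_⟩
      simp only [standardSum] at hba ⊢
      rw [map_add, Finsupp.linearCombination_single, one_smul, ← add_assoc, hba,
        tsub_add_cancel_of_le hi]

theorem le_of_standardSum_eq (hdisj : Pairwise fun i j => Disjoint (m i).support (m j).support)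
    {x y : standardExponents m × (ι →₀ ℕ)} (hxy : standardSum m x = standardSum m y) :
    y.2 ≤ x.2 := by
  intro i
  by_contra! hlt
  refine x.1.2 i fun v => ?_
  by_cases hv : v ∈ (m i).support
  · have hxyv := DFunLike.congr_fun hxy v
    simp only [standardSum, Finsupp.add_apply,
      linearCombination_apply_of_mem_support hdisj _ hv] at hxyv
    have hmul : (x.2 i + 1) * m i v ≤ y.2 i * m i v := Nat.mul_le_mul_right _ hlt
    linarith [Nat.zero_le ((y.1 : σ →₀ ℕ) v)]
  · simp [Finsupp.notMem_support_iff.1 hv]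

theorem standardSum_injective
    (hdisj : Pairwise fun i j => Disjoint (m i).support (m j).support) :
    Function.Injective (standardSum m) := by
  intro x y hxy
  have hexp : x.2 = y.2 :=
    le_antisymm (le_of_standardSum_eq hdisj hxy.symm) (le_of_standardSum_eq hdisj hxy)
  refine Prod.ext (Subtype.ext ?_) hexp
  simpa only [standardSum, hexp, add_left_inj] using hxy

end StandardExponents

section HomogeneousBasis

variable {σ ι κ K : Type*} [CommRing K]

theorem repr_homogeneousComponent (B : Module.Basis κ K (MvPolynomial σ K)) {deg : κ → ℕ}
    (hB : ∀ x, (B x).IsHomogeneous (deg x)) (n : ℕ) (f : MvPolynomial σ K) (x : κ) :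
    B.repr (homogeneousComponent n f) x = if deg x = n then B.repr f x else 0 := by
  suffices hcomp : Finsupp.lapply x ∘ₗ B.repr.toLinearMap ∘ₗ homogeneousComponent n =
      if deg x = n then Finsupp.lapply x ∘ₗ B.repr.toLinearMap else 0 by
    have hf := LinearMap.congr_fun hcomp f
    split_ifs at hf ⊢ <;> exact hf
  refine B.ext fun y => ?_
  rw [LinearMap.comp_apply, LinearMap.comp_apply, homogeneousComponent_of_mem (hB y)]
  rcases eq_or_ne y x with rfl | hyx
  · by_cases hn : deg y = n <;> simp [hn, eq_comm (a := n)]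
  · split_ifs <;> simp [hyx]

theorem prod_pow_add_single {M : Type*} [CommMonoid M] (q : ι → M) (a : ι →₀ ℕ) (i : ι) :
    (a + Finsupp.single i 1).prod (fun j n => q j ^ n) = q i * a.prod fun j n => q j ^ n := by
  classical
  rw [Finsupp.prod_add_index' (fun _ => pow_zero _) (fun _ _ _ => pow_add _ _ _)]
  simp [mul_comm]

/-- Reduction modulo `Q i = c i`, when `B (b, a)` is the product of the `Q i ^ a i` with `B (b, 0)`,
that is, when the elements `B (b, 0)` form a basis over the polynomials in the `Q i`. -/
noncomputable def specialize (B : Module.Basis (κ × (ι →₀ ℕ)) K (MvPolynomial σ K)) (c : ι → K) :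
    MvPolynomial σ K →ₗ[K] κ →₀ K :=
  B.constr K fun x => Finsupp.single x.1 (x.2.prod fun i n => c i ^ n)

variable {B : Module.Basis (κ × (ι →₀ ℕ)) K (MvPolynomial σ K)} {Q : ι → MvPolynomial σ K}

theorem specialize_mul (hQ : ∀ b a i, B (b, a + Finsupp.single i 1) = Q i * B (b, a)) (c : ι → K)
    (i : ι) (f : MvPolynomial σ K) : specialize B c (Q i * f) = c i • specialize B c f := by
  suffices hcomp : specialize B c ∘ₗ LinearMap.mulLeft K (Q i) = c i • specialize B c from
    LinearMap.congr_fun hcomp f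
  refine B.ext fun ⟨b, a⟩ => ?_
  rw [LinearMap.comp_apply, LinearMap.mulLeft_apply, ← hQ, LinearMap.smul_apply, specialize,
    B.constr_basis, B.constr_basis, prod_pow_add_single, Finsupp.smul_single, smul_eq_mul]

theorem specialize_eq_zero_of_mem_span
    (hQ : ∀ b a i, B (b, a + Finsupp.single i 1) = Q i * B (b, a)) {c : ι → K}
    {f : MvPolynomial σ K} (hf : f ∈ Ideal.span (Set.range fun i => Q i - C (c i))) :
    specialize B c f = 0 := by
  induction hf using Submodule.closure_induction with
  | zero => exact map_zero _
  | add f g _ _ hf hg => rw [map_add, hf, hg, add_zero]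
  | smul_mem g _ hmem =>
    obtain ⟨i, rfl⟩ := hmem
    rw [smul_eq_mul, mul_comm, sub_mul, map_sub, specialize_mul hQ, ← smul_eq_C_mul, map_smul,
      sub_self]

variable {deg : κ → ℕ} {e : ι → ℕ}

theorem specialize_apply_of_totalDegree_le
    (hB : ∀ x, (B x).IsHomogeneous (deg x.1 + Finsupp.weight e x.2)) (he : ∀ i, e i ≠ 0)
    (c : ι → K) {f : MvPolynomial σ K} {b : κ} (hf : f.totalDegree ≤ deg b) :
    specialize B c f b = B.repr f (b, 0) := by
  have := Finsupp.nonTorsionWeight_of ℕ e he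
  rw [specialize, B.constr_apply, Finsupp.sum, Finsupp.finsetSum_apply,
    Finset.sum_eq_single (b, 0)]
  · simp
  · rintro ⟨b', a⟩ hmem hne
    suffices hb : b' ≠ b by simp [Finsupp.single_eq_of_ne hb.symm]
    rintro rfl
    have ha : Finsupp.weight e a ≠ 0 := fun h =>
      hne (by rw [(Finsupp.weight_eq_zero_iff_eq_zero e).1 h])
    refine Finsupp.mem_support_iff.1 hmem ?_
    have hrepr := repr_homogeneousComponent B hB (deg b' + Finsupp.weight e a) f (b', a)
    rwa [homogeneousComponent_eq_zero _ _ (by omega), map_zero, Finsupp.zero_apply, if_pos rfl,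
      eq_comm] at hrepr
  · intro hmem
    simp [Finsupp.notMem_support_iff.1 hmem]

theorem basis_mem_span_range (hQ : ∀ b a i, B (b, a + Finsupp.single i 1) = Q i * B (b, a)) (b : κ)
    {a : ι →₀ ℕ} (ha : a ≠ 0) : B (b, a) ∈ Ideal.span (Set.range Q) := by
  classical
  obtain ⟨i, hi⟩ := Finsupp.ne_iff.1 ha
  have hle : Finsupp.single i 1 ≤ a := by
    simpa [Finsupp.single_le_iff, Nat.one_le_iff_ne_zero] using hi
  rw [← tsub_add_cancel_of_le hle, hQ]
  exact Ideal.mul_mem_right _ _ (Ideal.subset_span ⟨i, rfl⟩)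

theorem homogeneousComponent_mem_span_of_basis
    (hQ : ∀ b a i, B (b, a + Finsupp.single i 1) = Q i * B (b, a))
    (hB : ∀ x, (B x).IsHomogeneous (deg x.1 + Finsupp.weight e x.2)) (he : ∀ i, e i ≠ 0)
    {c : ι → K} {d : ℕ} {f : MvPolynomial σ K} (hdeg : f.totalDegree ≤ d)
    (hf : f ∈ Ideal.span (Set.range fun i => Q i - C (c i))) :
    homogeneousComponent d f ∈ Ideal.span (Set.range Q) := by
  rw [← B.linearCombination_repr (homogeneousComponent d f), Finsupp.linearCombination_apply]
  refine Ideal.sum_mem _ fun ⟨b, a⟩ hmem => ?_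
  rw [Finsupp.mem_support_iff, repr_homogeneousComponent B hB, ite_ne_right_iff] at hmem
  obtain ⟨hd, hrepr⟩ := hmem
  refine Submodule.smul_of_tower_mem _ _ (basis_mem_span_range hQ b ?_)
  rintro rfl
  rw [map_zero, add_zero] at hd
  rw [← specialize_apply_of_totalDegree_le hB he c (hdeg.trans_eq hd.symm),
    specialize_eq_zero_of_mem_span hQ hf] at hrepr
  exact hrepr rfl

end HomogeneousBasis

section CoprimeLeadingTerms

variable {σ ι K : Type*} [CommRing K]

/-- The polynomial obtained from the monomial with exponent `standardSum m x` by replacing each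
factor with exponent `m i` that was split off by `Q i`. -/
noncomputable def standardProduct (m : ι → σ →₀ ℕ) (Q : ι → MvPolynomial σ K)
    (x : standardExponents m × (ι →₀ ℕ)) : MvPolynomial σ K :=
  monomial (x.1 : σ →₀ ℕ) 1 * x.2.prod fun i n => Q i ^ n

variable {m : ι → σ →₀ ℕ} {Q : ι → MvPolynomial σ K}

theorem standardProduct_add_single (b : standardExponents m) (a : ι →₀ ℕ) (i : ι) :
    standardProduct m Q (b, a + Finsupp.single i 1) = Q i * standardProduct m Q (b, a) := by
  simp only [standardProduct, prod_pow_add_single]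
  ring

theorem isHomogeneous_standardProduct (hQ : ∀ i, (Q i).IsHomogeneous (m i).degree)
    (x : standardExponents m × (ι →₀ ℕ)) :
    (standardProduct m Q x).IsHomogeneous
      ((x.1 : σ →₀ ℕ).degree + Finsupp.weight (fun i => (m i).degree) x.2) := by
  refine (isHomogeneous_monomial _ rfl).mul ?_
  rw [Finsupp.weight_apply]
  refine IsHomogeneous.prod _ _ _ fun i _ => ?_
  simpa only [smul_eq_mul, mul_comm] using (hQ i).pow (x.2 i)

variable {r : (σ →₀ ℕ) → (σ →₀ ℕ) → Prop}

theorem hasUnitLeadingTerm_standardProduct (hr : IsTermOrder r)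
    (hQ : ∀ i, HasUnitLeadingTerm r (Q i) (m i)) (x : standardExponents m × (ι →₀ ℕ)) :
    HasUnitLeadingTerm r (standardProduct m Q x) (standardSum m x) :=
  (HasUnitLeadingTerm.monomial_one r _).mul hr
    (HasUnitLeadingTerm.prod hr _ fun i _ => (hQ i).pow hr _)

theorem homogeneousComponent_mem_span_of_hasUnitLeadingTerm (hr : IsTermOrder r)
    (hm : ∀ i, m i ≠ 0) (hdisj : Pairwise fun i j => Disjoint (m i).support (m j).support)
    (hlead : ∀ i, HasUnitLeadingTerm r (Q i) (m i)) (hhom : ∀ i, (Q i).IsHomogeneous (m i).degree)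
    {c : ι → K} {d : ℕ} {f : MvPolynomial σ K} (hdeg : f.totalDegree ≤ d)
    (hf : f ∈ Ideal.span (Set.range fun i => Q i - C (c i))) :
    homogeneousComponent d f ∈ Ideal.span (Set.range Q) := by
  have hlead' := hasUnitLeadingTerm_standardProduct hr hlead
  let B : Module.Basis (standardExponents m × (ι →₀ ℕ)) K (MvPolynomial σ K) :=
    .mk (HasUnitLeadingTerm.linearIndependent hr hlead' (standardSum_injective hdisj))
      (HasUnitLeadingTerm.top_le_span_range hr hlead' (standardSum_surjective hm))
  refine homogeneousComponent_mem_span_of_basis (B := B)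
    (deg := fun b : standardExponents m => (b : σ →₀ ℕ).degree) (e := fun i => (m i).degree)
    ?_ ?_ ?_ hdeg hf
  · intro b a i
    simpa only [B, Module.Basis.mk_apply] using standardProduct_add_single b a i
  · intro x
    simpa only [B, Module.Basis.mk_apply] using isHomogeneous_standardProduct hhom x
  · exact fun i => (Finsupp.degree_eq_zero_iff _).not.2 (hm i)

end CoprimeLeadingTerms

section QuadraticOrder

variable {σ : Type*}

/-- Among exponents of equal `w`-weight, the one of larger `w ^ 2`-weight is the smaller one. The
leading term is thus the one whose variables have the most evenly distributed weights. -/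
def quadraticOrder (w : σ → ℕ) (v u : σ →₀ ℕ) : Prop :=
  Finsupp.weight w v = Finsupp.weight w u ∧ Finsupp.weight (w ^ 2) u < Finsupp.weight (w ^ 2) v

theorem weight_sq_le (w : σ → ℕ) (u : σ →₀ ℕ) :
    Finsupp.weight (w ^ 2) u ≤ Finsupp.weight w u ^ 2 := by
  have hle : ∀ s ∈ u.support, u s • (w ^ 2) s ≤ u s • w s * Finsupp.weight w u := by
    intro s hs
    have hws : w s ≤ Finsupp.weight w u :=
      Finsupp.le_weight_of_ne_zero' w (Finsupp.mem_support_iff.1 hs)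
    rw [Pi.pow_apply, sq, smul_eq_mul, smul_eq_mul, ← mul_assoc]
    exact Nat.mul_le_mul_left _ hws
  calc Finsupp.weight (w ^ 2) u
      ≤ ∑ s ∈ u.support, u s • w s * Finsupp.weight w u := Finset.sum_le_sum hle
    _ = Finsupp.weight w u ^ 2 := by
      rw [← Finset.sum_mul, sq]
      rfl

theorem isTermOrder_quadraticOrder (w : σ → ℕ) : IsTermOrder (quadraticOrder w) where
  wf := by
    refine Subrelation.wf (r := InvImage (· < ·) fun u : σ →₀ ℕ =>
      Finsupp.weight w u ^ 2 - Finsupp.weight (w ^ 2) u) ?_ (InvImage.wf _ wellFounded_lt)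
    rintro v u ⟨hw, hlt⟩
    have hle := weight_sq_le w v
    simp only [InvImage]
    rw [hw] at hle ⊢
    omega
  trans := fun ⟨hab, hab'⟩ ⟨hbc, hbc'⟩ => ⟨hab.trans hbc, hbc'.trans hab'⟩
  add_right := fun c ⟨hab, hab'⟩ => by
    simpa only [quadraticOrder, map_add, add_left_inj, add_lt_add_iff_right] using ⟨hab, hab'⟩

theorem quadraticOrder_single_add_single {w : σ → ℕ} {x y x' y' : σ} (hbal : w x' = w y')
    (hsum : w x + w y = w x' + w y') (hne : w x ≠ w x') :
    quadraticOrder w (Finsupp.single x 1 + Finsupp.single y 1)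
      (Finsupp.single x' 1 + Finsupp.single y' 1) := by
  simp only [quadraticOrder, map_add, Finsupp.weight_single, one_smul, Pi.pow_apply]
  refine ⟨hsum, ?_⟩
  zify at *
  nlinarith [sq_pos_of_ne_zero (sub_ne_zero.2 hne)]

end QuadraticOrder

section Determinant

open Finset.HasAntidiagonal (antidiagonal mem_antidiagonal)

theorem sum_antidiagonal_two_mul_add_one {M : Type*} [AddCommMonoid M] (n : ℕ) (g : ℕ × ℕ → M) :
    ∑ p ∈ antidiagonal (2 * n + 1), g p =
      ∑ p ∈ antidiagonal n, (g (2 * p.1, 2 * p.2 + 1) + g (2 * p.1 + 1, 2 * p.2)) := by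
  have hrange (h : ℕ → M) : ∑ k ∈ Finset.range (2 * (n + 1)), h k =
      ∑ i ∈ Finset.range (n + 1), (h (2 * i) + h (2 * i + 1)) := by
    induction n + 1 with
    | zero => rfl
    | succ n ih =>
      rw [mul_add, Finset.sum_range_succ, Finset.sum_range_succ, ih, Finset.sum_range_succ,
        add_assoc]
  rw [Finset.Nat.sum_antidiagonal_eq_sum_range_succ_mk,
    Finset.Nat.sum_antidiagonal_eq_sum_range_succ_mk]
  refine (hrange _).trans (Finset.sum_congr rfl fun i hi => ?_)
  rw [Finset.mem_range] at hi
  congr 3 <;> omega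

theorem iterate_derivation_mul {R A : Type*} [CommRing R] [CommRing A] [Algebra R A]
    (D : Derivation R A A) (n : ℕ) (a b : A) :
    D^[n] (a * b) = ∑ p ∈ antidiagonal n, n.choose p.1 • (D^[p.1] a * D^[p.2] b) := by
  induction n with
  | zero => simp
  | succ n ih =>
    rw [Finset.sum_antidiagonal_choose_succ_nsmul (fun i j => D^[i] a * D^[j] b) n]
    simp only [Function.iterate_succ_apply', ih, map_sum, map_nsmul, D.leibniz, smul_eq_mul,
      smul_add, Finset.sum_add_distrib]
    refine congrArg _ (Finset.sum_congr rfl fun p hp => ?_)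
    rw [n.choose_symm_of_eq_add (mem_antidiagonal.1 hp).symm, mul_comm]

theorem iterate_derivation_one {R A : Type*} [CommRing R] [CommRing A] [Algebra R A]
    (D : Derivation R A A) (n : ℕ) :
    D^[n] 1 = if n = 0 then 1 else 0 := by
  cases n with
  | zero => rfl
  | succ n =>
    rw [Function.iterate_succ_apply, D.map_one_eq_zero, iterate_map_zero, if_neg n.succ_ne_zero]

theorem isUnit_natCast_of_ne_zero {R : Type*} [CommRing R] [Algebra ℚ R] {n : ℕ} (hn : n ≠ 0) :
    IsUnit (n : R) := by
  simpa using (isUnit_iff_ne_zero.2 (Nat.cast_ne_zero.2 hn : (n : ℚ) ≠ 0)).map (algebraMap ℚ R)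

/-- The `k`-th variable of row `i`, the row being listed as
`c_{i1}, c_{i2}, c_{i1}', c_{i2}', c_{i1}'', …`. -/
def rowVar (i : Fin 2) (k : ℕ) : DVar :=
  ((i, Fin.ofNat 2 k), k / 2)

theorem rowVar_two_mul (i : Fin 2) (k : ℕ) : rowVar i (2 * k) = ((i, 0), k) := by
  simp [rowVar, Fin.ext_iff]

theorem rowVar_two_mul_add_one (i : Fin 2) (k : ℕ) : rowVar i (2 * k + 1) = ((i, 1), k) := by
  simp [rowVar, Fin.ext_iff, Nat.mul_add_div]

/-- The weight of a variable: its index in its row, increased by one in the first row so that both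
variables of `leadingExponent n` have weight `n + 1`. The subtraction never truncates. -/
def position (v : DVar) : ℕ :=
  2 * v.2 + 1 + v.1.2 - v.1.1

theorem position_rowVar_zero (k : ℕ) : position (rowVar 0 k) = k + 1 := by
  simp only [position, rowVar, Fin.ofNat_eq_cast, Fin.val_natCast, Fin.coe_ofNat_eq_mod]
  omega

theorem position_rowVar_one (k : ℕ) : position (rowVar 1 k) = k := by
  simp only [position, rowVar, Fin.ofNat_eq_cast, Fin.val_natCast, Fin.coe_ofNat_eq_mod]
  omega

/-- The exponent of the leading monomial of the `n`-th derivative of `det`. -/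
noncomputable def leadingExponent (n : ℕ) : DVar →₀ ℕ :=
  Finsupp.single (rowVar 0 n) 1 + Finsupp.single (rowVar 1 (n + 1)) 1

theorem degree_leadingExponent (n : ℕ) : (leadingExponent n).degree = 2 := by
  simp [leadingExponent]

theorem leadingExponent_ne_zero (n : ℕ) : leadingExponent n ≠ 0 := by
  rw [Ne, ← Finsupp.degree_eq_zero_iff, degree_leadingExponent]
  exact two_ne_zero

theorem position_eq_of_mem_support_leadingExponent {n : ℕ} {v : DVar}
    (hv : v ∈ (leadingExponent n).support) : position v = n + 1 := by
  classical
  rcases Finset.mem_union.1 (Finsupp.support_add hv) with hv | hv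
  · rw [Finset.mem_singleton.1 (Finsupp.support_single_subset hv), position_rowVar_zero]
  · rw [Finset.mem_singleton.1 (Finsupp.support_single_subset hv), position_rowVar_one]

theorem disjoint_support_leadingExponent :
    Pairwise fun i j => Disjoint (leadingExponent i).support (leadingExponent j).support := by
  intro i j hij
  refine Finset.disjoint_left.2 fun v hi hj => hij ?_
  have hi := position_eq_of_mem_support_leadingExponent hi
  have hj := position_eq_of_mem_support_leadingExponent hj
  omega

variable {K : Type} [CommRing K] {D : Derivation ℤ (DiffPolyC K) (DiffPolyC K)}

theorem iterate_derivation_X (hX : ∀ v : DVar, D (X v) = X (v.1, v.2 + 1)) (a : Fin 2 × Fin 2)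
    (n : ℕ) : D^[n] (X (a, 0)) = X (a, n) := by
  induction n with
  | zero => rfl
  | succ n ih => rw [Function.iterate_succ_apply', ih, hX]

theorem iterate_derivation_detC (hX : ∀ v : DVar, D (X v) = X (v.1, v.2 + 1)) (n : ℕ) :
    D^[n] (detC K) = ∑ p ∈ antidiagonal (2 * n + 1),
      monomial (Finsupp.single (rowVar 0 p.1) 1 + Finsupp.single (rowVar 1 p.2) 1)
        ((-1) ^ p.1 * (n.choose (p.1 / 2) : K)) := by
  have hmonomial (v w : DVar) (c : K) :
      monomial (Finsupp.single v 1 + Finsupp.single w 1) c = C c * (X v * X w) := by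
    simp [X, monomial_mul, C_mul_monomial]
  rw [detC, iterate_map_sub, iterate_derivation_mul, iterate_derivation_mul,
    ← Finset.sum_sub_distrib, sum_antidiagonal_two_mul_add_one]
  refine Finset.sum_congr rfl fun p _ => ?_
  have hodd : (2 * p.1 + 1) / 2 = p.1 := by omega
  have heven : 2 * p.1 / 2 = p.1 := by omega
  simp only [hmonomial, rowVar_two_mul, rowVar_two_mul_add_one, iterate_derivation_X hX, hodd,
    heven, (even_two_mul p.1).neg_one_pow, (odd_two_mul_add_one p.1).neg_one_pow, nsmul_eq_mul,
    map_mul, map_neg, map_one, map_natCast]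
  ring

theorem iterate_derivation_detC_sub_one (D : Derivation ℤ (DiffPolyC K) (DiffPolyC K)) (n : ℕ) :
    D^[n] (detC K - 1) = D^[n] (detC K) - C (if n = 0 then 1 else 0) := by
  rw [iterate_map_sub, iterate_derivation_one, apply_ite C, C_1, C_0]

theorem isHomogeneous_iterate_derivation_detC (hX : ∀ v : DVar, D (X v) = X (v.1, v.2 + 1))
    (n : ℕ) : (D^[n] (detC K)).IsHomogeneous 2 := by
  rw [iterate_derivation_detC hX]
  exact IsHomogeneous.sum _ _ _ fun p _ => isHomogeneous_monomial _ (by simp)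

theorem hasUnitLeadingTerm_iterate_derivation_detC [Algebra ℚ K]
    (hX : ∀ v : DVar, D (X v) = X (v.1, v.2 + 1)) (n : ℕ) :
    HasUnitLeadingTerm (quadraticOrder position) (D^[n] (detC K)) (leadingExponent n) := by
  rw [iterate_derivation_detC hX]
  refine HasUnitLeadingTerm.sum_monomial (isTermOrder_quadraticOrder _) (k := (n, n + 1))
    (u := fun p : ℕ × ℕ => Finsupp.single (rowVar 0 p.1) 1 + Finsupp.single (rowVar 1 p.2) 1)
    (mem_antidiagonal.2 (by omega)) ?_ ?_
  · have hchoose : n.choose (n / 2) ≠ 0 := (Nat.choose_pos (Nat.div_le_self n 2)).ne'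
    exact (isUnit_neg_one.pow n).mul (isUnit_natCast_of_ne_zero hchoose)
  · rintro ⟨i, j⟩ hij hne
    rw [mem_antidiagonal] at hij
    have hi : i ≠ n := fun hi => hne (Prod.ext hi (by simp only at hij ⊢; omega))
    apply quadraticOrder_single_add_single <;>
      simp only [position_rowVar_zero, position_rowVar_one] <;> omega

theorem homogeneousComponent_mem_detIdeal_general {K : Type} [CommRing K] [Algebra ℚ K]
    (δ : K → K) (D : DiffPolyC K → DiffPolyC K)
    (hD : IsDiffStructure δ D)
    (d : ℕ) (f : DiffPolyC K)
    (hdeg : f.totalDegree ≤ d)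
    (hf : f ∈ Ideal.span {g : DiffPolyC K | ∃ i : ℕ, g = D^[i] (detC K - 1)}) :
    homogeneousComponent d f ∈
      Ideal.span {g : DiffPolyC K | ∃ i : ℕ, g = D^[i] (detC K)} := by
  obtain ⟨-, -, hadd, hmul, -, hX⟩ := hD
  let D' : Derivation ℤ (DiffPolyC K) (DiffPolyC K) :=
    Derivation.mk' (AddMonoidHom.mk' D hadd).toIntLinearMap fun f g => by
      simpa [add_comm, mul_comm] using hmul f g
  have hrange (g : ℕ → DiffPolyC K) : {p | ∃ i, p = g i} = Set.range g :=
    Set.ext fun _ => exists_congr fun _ => eq_comm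
  rw [hrange] at hf ⊢
  refine homogeneousComponent_mem_span_of_hasUnitLeadingTerm
    (isTermOrder_quadraticOrder position) leadingExponent_ne_zero disjoint_support_leadingExponent
    (hasUnitLeadingTerm_iterate_derivation_detC (D := D') hX)
    (fun n => degree_leadingExponent n ▸ isHomogeneous_iterate_derivation_detC (D := D') hX n)
    hdeg ?_ (c := fun i => if i = 0 then 1 else 0)
  convert hf using 4 with i
  exact (iterate_derivation_detC_sub_one D' i).symm

end Determinant

/-- If `f ∈ [det−1]` and every monomial of `f` has total degree at most `d`,
then the degree-`d` homogeneous component `π_d(f)` of `f` belongs to the differential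
ideal `[det]`. -/
theorem homogeneousComponent_mem_detIdeal {K : Type} [Field K] [CharZero K]
    (δ : K → K) (D : DiffPolyC K → DiffPolyC K)
    (hD : IsDiffStructure δ D)
    (d : ℕ) (f : DiffPolyC K)
    (hdeg : f.totalDegree ≤ d)
    (hf : f ∈ Ideal.span {g : DiffPolyC K | ∃ i : ℕ, g = D^[i] (detC K - 1)}) :
    homogeneousComponent d f ∈
      Ideal.span {g : DiffPolyC K | ∃ i : ℕ, g = D^[i] (detC K)} := by
  exact homogeneousComponent_mem_detIdeal_general δ D hD d f hdeg hf
end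

section
/- Let g = [[a,b],[c,d]] be a matrix with entries in K satisfying a·d − b·c = 1. Then σ_g(x'y − xy') − (x'y − xy') lies in span_K{x², xy, y²}. Consequently, for every d ≥ 2 the subspace W_d := P_d^0 + (x'y − xy')·P_{d−2}^0 of P satisfies σ_g(W_d) ⊆ W_d for all g ∈ SL₂(K). -/
open MvPolynomial

/-- Variables of the differential polynomial ring `P = K{x,y}`: the variable `(0, n)`
represents `x^{(n)}` and `(1, n)` represents `y^{(n)}`. -/
abbrev PVar : Type := Fin 2 × ℕ

/-- The differential polynomial ring `P = K{x,y}`. -/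
abbrev DiffPolyP (K : Type) [CommRing K] : Type := MvPolynomial PVar K

/-- `D : P → P` is the unique derivation extending the derivation `δ` of `K` and shifting
variables, i.e. `D(x^{(n)}) = x^{(n+1)}` and `D(y^{(n)}) = y^{(n+1)}`. -/
def IsDiffStructureP {K : Type} [CommRing K] (δ : K → K)
    (D : DiffPolyP K → DiffPolyP K) : Prop :=
  (∀ a b : K, δ (a + b) = δ a + δ b) ∧
  (∀ a b : K, δ (a * b) = δ a * b + a * δ b) ∧
  (∀ f g : DiffPolyP K, D (f + g) = D f + D g) ∧
  (∀ f g : DiffPolyP K, D (f * g) = D f * g + f * D g) ∧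
  (∀ a : K, D (C a) = C (δ a)) ∧
  (∀ v : PVar, D (X v) = X (v.1, v.2 + 1))

/-- The weight of a monomial (given by its exponents `m`):
`wt(∏ (x^{(p)})^{m_p} · ∏ (y^{(q)})^{n_q}) = Σ p·m_p + Σ q·n_q`. -/
def wdeg (m : PVar →₀ ℕ) : ℕ := m.sum fun v k => v.2 * k

/-- The weight of a differential polynomial: the maximum weight of a monomial occurring
in it (with nonzero coefficient); `wt 0 = 0`. -/
noncomputable def wt {K : Type} [CommRing K] (f : DiffPolyP K) : ℕ := f.support.sup wdeg

/-- `d(h) = Σ_p m_p − Σ_q n_q` for a monomial with exponents `m`. -/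
def dExp (m : PVar →₀ ℕ) : ℤ := m.sum fun v k => if v.1 = 0 then (k : ℤ) else -(k : ℤ)

/-- `τ_b : P → P`, the unique `K`-algebra homomorphism with `τ_b(x^{(p)}) = D^p(b·x)` and
`τ_b(y^{(q)}) = D^q(b⁻¹·y)` (the action of the diagonal torus element `diag(b, b⁻¹)`). -/
noncomputable def tauP {K : Type} [Field K] (D : DiffPolyP K → DiffPolyP K) (b : K) :
    DiffPolyP K →ₐ[K] DiffPolyP K :=
  aeval fun v : PVar =>
    D^[v.2] (C (if v.1 = 0 then b else b⁻¹) * X (v.1, (0 : ℕ)))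

/-- `σ_g : P → P` for `g = [[a, b], [c, e]]`: the unique `K`-algebra homomorphism with
`σ_g(x^{(p)}) = D^p(a·x + c·y)` and `σ_g(y^{(q)}) = D^q(b·x + e·y)`. -/
noncomputable def sigmaP {K : Type} [Field K] (D : DiffPolyP K → DiffPolyP K)
    (a b c e : K) : DiffPolyP K →ₐ[K] DiffPolyP K :=
  aeval fun v : PVar =>
    D^[v.2] (if v.1 = 0
      then C a * X ((0 : Fin 2), (0 : ℕ)) + C c * X ((1 : Fin 2), (0 : ℕ))
      else C b * X ((0 : Fin 2), (0 : ℕ)) + C e * X ((1 : Fin 2), (0 : ℕ)))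

/-- The Wronskian `x'y − xy'`. -/
noncomputable def wronsk (K : Type) [Field K] : DiffPolyP K :=
  X ((0 : Fin 2), (1 : ℕ)) * X ((1 : Fin 2), (0 : ℕ))
    - X ((0 : Fin 2), (0 : ℕ)) * X ((1 : Fin 2), (1 : ℕ))

/-- `P_m^0 = span_K {x^m, x^{m−1}y, …, y^m}`. -/
noncomputable def P0 (K : Type) [Field K] (m : ℕ) : Submodule K (DiffPolyP K) :=
  Submodule.span K {f : DiffPolyP K | ∃ i : ℕ, i ≤ m ∧
    f = X ((0 : Fin 2), (0 : ℕ)) ^ i * X ((1 : Fin 2), (0 : ℕ)) ^ (m - i)}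

/-- `P_d^1`: the `K`-span of all monomials of degree `d` and weight at most `1`. -/
noncomputable def P1 (K : Type) [Field K] (d : ℕ) : Submodule K (DiffPolyP K) :=
  Submodule.span K {f : DiffPolyP K | ∃ m : PVar →₀ ℕ,
    (m.sum fun _ k => k) = d ∧ wdeg m ≤ 1 ∧ f = monomial m (1 : K)}

/-- `U_d = span_K {x^i y^{d−i}, D(x^i y^{d−i}) : 0 ≤ i ≤ d}`. -/
noncomputable def Ud (K : Type) [Field K] (D : DiffPolyP K → DiffPolyP K) (d : ℕ) :
    Submodule K (DiffPolyP K) :=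
  Submodule.span K {f : DiffPolyP K | ∃ i : ℕ, i ≤ d ∧
    (f = X ((0 : Fin 2), (0 : ℕ)) ^ i * X ((1 : Fin 2), (0 : ℕ)) ^ (d - i) ∨
     f = D (X ((0 : Fin 2), (0 : ℕ)) ^ i * X ((1 : Fin 2), (0 : ℕ)) ^ (d - i)))}

/-- `W_d = P_d^0 + (x'y − xy')·P_{d−2}^0`. -/
noncomputable def Wd (K : Type) [Field K] (d : ℕ) : Submodule K (DiffPolyP K) :=
  P0 K d ⊔ Submodule.map (LinearMap.mulLeft K (wronsk K)) (P0 K (d - 2))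

/-! With `w = x'y − xy'`, applying the derivation to `u = a x + c y` and `v = b x + e y` gives
`u'v − uv' = (ae − bc) w + (a'x + c'y) v − u (b'x + e'y)`: the derivatives of the coefficients
contribute only a quadratic form in `x, y`. Since `P_m^0` is the `m`-th power of the space of
linear forms, it is stable under `σ_g`, and `σ_g(w q) = σ_g(w) σ_g(q)` for `q ∈ P_{d-2}^0` lies in
`w · P_{d-2}^0 + P_2^0 · P_{d-2}^0 ⊆ W_d`. -/

open scoped Pointwise in
theorem pair_pow_eq_setOf {M : Type*} [CommMonoid M] (x y : M) (m : ℕ) :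
    ({x, y} : Set M) ^ m = {f | ∃ i ≤ m, f = x ^ i * y ^ (m - i)} := by
  induction m with
  | zero => simp [Set.ext_iff]
  | succ m ih =>
    rw [pow_succ, ih]
    ext f
    constructor
    · rintro ⟨_, ⟨i, hi, rfl⟩, _, rfl | rfl, rfl⟩
      · exact ⟨i + 1, by lia, by simp [pow_succ, mul_right_comm]⟩
      · exact ⟨i, by lia, by simp [Nat.succ_sub hi, pow_succ, mul_assoc]⟩
    · rintro ⟨_ | i, hi, rfl⟩
      · exact ⟨_, ⟨0, m.zero_le, rfl⟩, y, by simp, by simp [pow_succ]⟩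
      · exact ⟨_, ⟨i, by lia, rfl⟩, x, by simp, by simp [pow_succ, mul_right_comm]⟩

theorem wronskian_linear_combination {R A : Type*} [CommSemiring R] [CommRing A]
    [Algebra R A] (D : Derivation R A A) (a b c e u v : A) :
    D (a * u + c * v) * (b * u + e * v) - (a * u + c * v) * D (b * u + e * v) =
      (a * e - b * c) * (D u * v - u * D v) +
        ((D a * u + D c * v) * (b * u + e * v) - (a * u + c * v) * (D b * u + D e * v)) := by
  simp only [map_add, Derivation.leibniz, smul_eq_mul]
  ring

/-- `D` bundled as a derivation. It is only `ℤ`-linear, since `D` restricts to `δ` on `K`. -/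
noncomputable def IsDiffStructureP.derivation {K : Type} [CommRing K] {δ : K → K}
    {D : DiffPolyP K → DiffPolyP K} (hD : IsDiffStructureP δ D) :
    Derivation ℤ (DiffPolyP K) (DiffPolyP K) :=
  Derivation.mk' (AddMonoidHom.mk' D hD.2.2.1).toIntLinearMap fun f g => by
    simpa [mul_comm, add_comm] using hD.2.2.2.1 f g

section BinaryForms

variable {K : Type} [Field K]

/-- The linear form `a x + c y`, so that `σ_g(x) = linForm a c` and `σ_g(y) = linForm b e` for
`g = [[a, b], [c, e]]`. -/
noncomputable def linForm (a c : K) : DiffPolyP K :=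
  C a * X ((0 : Fin 2), (0 : ℕ)) + C c * X ((1 : Fin 2), (0 : ℕ))

theorem P0_eq_span_pair_pow (m : ℕ) :
    P0 K m = Submodule.span K {X ((0 : Fin 2), (0 : ℕ)), X ((1 : Fin 2), (0 : ℕ))} ^ m := by
  rw [Submodule.span_pow, pair_pow_eq_setOf, P0]

theorem P0_one_eq_span_pair :
    P0 K 1 = Submodule.span K {X ((0 : Fin 2), (0 : ℕ)), X ((1 : Fin 2), (0 : ℕ))} := by
  rw [P0_eq_span_pair_pow, pow_one]

theorem P0_eq_P0_one_pow (m : ℕ) : P0 K m = P0 K 1 ^ m := by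
  rw [P0_eq_span_pair_pow, P0_one_eq_span_pair]

theorem linForm_mem_P0_one (a c : K) : linForm a c ∈ P0 K 1 := by
  rw [P0_one_eq_span_pair, Submodule.mem_span_pair]
  exact ⟨a, c, by simp only [linForm, smul_eq_C_mul]⟩

theorem mul_mem_P0 {m n : ℕ} {f g : DiffPolyP K} (hf : f ∈ P0 K m) (hg : g ∈ P0 K n) :
    f * g ∈ P0 K (m + n) := by
  rw [P0_eq_P0_one_pow, pow_add, ← P0_eq_P0_one_pow m, ← P0_eq_P0_one_pow n]
  exact Submodule.mul_mem_mul hf hg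

theorem linForm_mul_linForm_mem_P0_two (a b c e : K) : linForm a c * linForm b e ∈ P0 K 2 := by
  rw [← one_add_one_eq_two]
  exact mul_mem_P0 (linForm_mem_P0_one a c) (linForm_mem_P0_one b e)

end BinaryForms

section Stability

variable {K : Type} [Field K] {σ : DiffPolyP K →ₐ[K] DiffPolyP K}

theorem map_P0_le (hσ : (P0 K 1).map σ.toLinearMap ≤ P0 K 1) (m : ℕ) :
    (P0 K m).map σ.toLinearMap ≤ P0 K m := by
  rw [P0_eq_P0_one_pow, Submodule.map_pow]
  exact pow_le_pow_left' hσ m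

theorem map_Wd_le (hσ : (P0 K 1).map σ.toLinearMap ≤ P0 K 1) {t : K}
    (hw : σ (wronsk K) - t • wronsk K ∈ P0 K 2) {d : ℕ} (hd : 2 ≤ d) :
    (Wd K d).map σ.toLinearMap ≤ Wd K d := by
  rw [Wd, Submodule.map_sup]
  refine sup_le (le_sup_of_le_left (map_P0_le hσ d)) ?_
  rintro _ ⟨_, ⟨q, hq, rfl⟩, rfl⟩
  have hσq : σ q ∈ P0 K (d - 2) := map_P0_le hσ _ (Submodule.mem_map_of_mem hq)
  have hquad : (σ (wronsk K) - t • wronsk K) * σ q ∈ P0 K d := by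
    simpa only [Nat.add_sub_cancel' hd] using mul_mem_P0 hw hσq
  have hsplit : σ (wronsk K * q) =
      (σ (wronsk K) - t • wronsk K) * σ q + wronsk K * t • σ q := by
    rw [map_mul, sub_mul, mul_smul_comm, smul_mul_assoc, sub_add_cancel]
  simpa only [LinearMap.mulLeft_apply, AlgHom.toLinearMap_apply, hsplit] using
    Submodule.add_mem_sup hquad
      (Submodule.mem_map_of_mem (f := LinearMap.mulLeft K (wronsk K)) (Submodule.smul_mem _ t hσq))

end Stability

section Sigma

variable {K : Type} [Field K] {δ : K → K} (D : DiffPolyP K → DiffPolyP K)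

theorem sigmaP_X_zero (a b c e : K) (p : ℕ) :
    sigmaP D a b c e (X (0, p)) = D^[p] (linForm a c) := by
  simp [sigmaP, linForm]

theorem sigmaP_X_one (a b c e : K) (q : ℕ) :
    sigmaP D a b c e (X (1, q)) = D^[q] (linForm b e) := by
  simp [sigmaP, linForm]

theorem map_sigmaP_P0_one_le (a b c e : K) :
    (P0 K 1).map (sigmaP D a b c e).toLinearMap ≤ P0 K 1 := by
  rw [P0_one_eq_span_pair, Submodule.map_span_le, ← P0_one_eq_span_pair]
  rintro _ (rfl | rfl)
  · simpa only [AlgHom.toLinearMap_apply, sigmaP_X_zero,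
      Function.iterate_zero_apply] using linForm_mem_P0_one a c
  · simpa only [AlgHom.toLinearMap_apply, sigmaP_X_one,
      Function.iterate_zero_apply] using linForm_mem_P0_one b e

theorem sigmaP_wronsk (a b c e : K) :
    sigmaP D a b c e (wronsk K) =
      D (linForm a c) * linForm b e - linForm a c * D (linForm b e) := by
  simp only [wronsk, map_sub, map_mul, sigmaP_X_zero, sigmaP_X_one, Function.iterate_zero_apply,
    Function.iterate_one]

variable {D}

theorem sigmaP_wronsk_eq_det_smul_add (hD : IsDiffStructureP δ D) (a b c e : K) :
    sigmaP D a b c e (wronsk K) = (a * e - b * c) • wronsk K +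
      (linForm (δ a) (δ c) * linForm b e - linForm a c * linForm (δ b) (δ e)) := by
  have hC (k : K) : hD.derivation (C k) = C (δ k) := hD.2.2.2.2.1 k
  have hX (v : PVar) : hD.derivation (X v) = X (v.1, v.2 + 1) := hD.2.2.2.2.2 v
  have h := wronskian_linear_combination hD.derivation (C a) (C b) (C c) (C e)
    (X ((0 : Fin 2), (0 : ℕ))) (X ((1 : Fin 2), (0 : ℕ)))
  simp only [hC, hX, zero_add, ← C_mul, ← C_sub] at h
  rw [sigmaP_wronsk, smul_eq_C_mul]
  exact h

theorem sigmaP_wronsk_sub_det_smul_mem_P0_two (hD : IsDiffStructureP δ D) (a b c e : K) :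
    sigmaP D a b c e (wronsk K) - (a * e - b * c) • wronsk K ∈ P0 K 2 := by
  rw [sigmaP_wronsk_eq_det_smul_add hD, add_sub_cancel_left]
  exact sub_mem (linForm_mul_linForm_mem_P0_two _ _ _ _) (linForm_mul_linForm_mem_P0_two _ _ _ _)

end Sigma

theorem sigma_wronskian_and_Wd_stable_general {K : Type} [Field K]
    (δ : K → K) (D : DiffPolyP K → DiffPolyP K) (hD : IsDiffStructureP δ D) (a b c e : K) :
    sigmaP D a b c e (wronsk K) - (a * e - b * c) • wronsk K ∈ P0 K 2 ∧
    ∀ d : ℕ, 2 ≤ d → ∀ f ∈ Wd K d, sigmaP D a b c e f ∈ Wd K d := by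
  have hw := sigmaP_wronsk_sub_det_smul_mem_P0_two hD a b c e
  exact ⟨hw, fun d hd f hf =>
    map_Wd_le (map_sigmaP_P0_one_le D a b c e) hw hd (Submodule.mem_map_of_mem hf)⟩

/-- For `g = [[a, b], [c, e]]` with `a·e − b·c = 1`, the element
`σ_g(x'y − xy') − (x'y − xy')` lies in `span_K{x², xy, y²} = P₂⁰`.  Consequently, for every
`d ≥ 2` the subspace `W_d = P_d^0 + (x'y − xy')·P_{d−2}^0` is stable under `σ_g` for all
`g ∈ SL₂(K)`. -/
theorem sigma_wronskian_and_Wd_stable {K : Type} [Field K] [CharZero K]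
    (δ : K → K) (D : DiffPolyP K → DiffPolyP K)
    (hD : IsDiffStructureP δ D)
    (a b c e : K) (hdet : a * e - b * c = 1) :
    sigmaP D a b c e (wronsk K) - wronsk K ∈ P0 K 2 ∧
    ∀ d : ℕ, 2 ≤ d →
      ∀ a' b' c' e' : K, a' * e' - b' * c' = 1 →
        ∀ f ∈ Wd K d, sigmaP D a' b' c' e' f ∈ Wd K d := by
  have general := sigma_wronskian_and_Wd_stable_general δ D hD
  exact ⟨by simpa only [hdet, one_smul] using (general a b c e).1,
    fun d hd a' b' c' e' _ => (general a' b' c' e').2 d hd⟩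
end
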